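/- Invariance of (2,5)-cuspidal edges under isometric and anti-isometric deformations: let f be a generalized timelike minimal surface with real Weierstrass data (g1, g2, ω1 du, ω2 dv) and let p be an ω-singular point of f. Then the following are equivalent: (i) f is A-equivalent at p to the (2,5)-cuspidal edge f_CE^{(2,5)}(u,v) = (u, v^2, v^5) at the origin; (ii) for every θ ∈ R the associated family member f_θ is A-equivalent at p to the (2,5)-cuspidal edge; (iii) the conjugate surface f̂ is A-equivalent at p to the (2,5)-cuspidal edge. -/

import Mathlib

noncomputable section

open Real Filter

abbrev R2 : Type := ℝ × ℝ
abbrev R3 : Type := ℝ × ℝ × ℝ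

/-- The partial derivative in the `u`-direction. -/
def pu (f : R2 → R3) (p : R2) : R3 := fderiv ℝ f p (1, 0)
/-- The partial derivative in the `v`-direction. -/
def pv (f : R2 → R3) (p : R2) : R3 := fderiv ℝ f p (0, 1)

/-- Determinant of three column vectors in ℝ³. -/
def det3 (a b c : R3) : ℝ :=
  a.1 * (b.2.1 * c.2.2 - b.2.2 * c.2.1)
  - b.1 * (a.2.1 * c.2.2 - a.2.2 * c.2.1)
  + c.1 * (a.2.1 * b.2.2 - a.2.2 * b.2.1)

/-- Determinant of two vectors in ℝ². -/
def det2 (a b : R2) : ℝ := a.1 * b.2 - a.2 * b.1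

/-- Euclidean inner product on ℝ³. -/
def ip3 (a b : R3) : ℝ := a.1 * b.1 + a.2.1 * b.2.1 + a.2.2 * b.2.2

/-- `f : ℝ² → ℝ³ = 𝕃³` is the generalized timelike minimal surface with real Weierstrass
data `(g1, g2, w1 du, w2 dv)`: it is smooth, its partial derivatives are
`f_u = (ω1/2)·(-1-g1², 1-g1², 2g1)` and `f_v = (ω2/2)·(1+g2², 1-g2², -2g2)`
(which encodes the Weierstrass-type integral representation), and it is an immersion
on an open dense set. -/
structure IsGTMS (f : R2 → R3) (g1 g2 w1 w2 : ℝ → ℝ) : Prop where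
  smooth_f : ContDiff ℝ (⊤ : ℕ∞) f
  smooth_g1 : ContDiff ℝ (⊤ : ℕ∞) g1
  smooth_g2 : ContDiff ℝ (⊤ : ℕ∞) g2
  smooth_w1 : ContDiff ℝ (⊤ : ℕ∞) w1
  smooth_w2 : ContDiff ℝ (⊤ : ℕ∞) w2
  deriv_u : ∀ p : R2, pu f p =
    ((-1 - g1 p.1 ^ 2) * w1 p.1 / 2, (1 - g1 p.1 ^ 2) * w1 p.1 / 2, g1 p.1 * w1 p.1)
  deriv_v : ∀ p : R2, pv f p =
    ((1 + g2 p.2 ^ 2) * w2 p.2 / 2, (1 - g2 p.2 ^ 2) * w2 p.2 / 2, -(g2 p.2 * w2 p.2))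
  dense_immersion : Dense {p : R2 | Function.Injective (fderiv ℝ f p)}

/-- `Φ` is a germ of diffeomorphism at `p`. -/
def IsLocalDiffeoAt {E F : Type*} [NormedAddCommGroup E] [NormedSpace ℝ E]
    [NormedAddCommGroup F] [NormedSpace ℝ F] (Φ : E → F) (p : E) : Prop :=
  ∃ (U : Set E) (V : Set F) (Φinv : F → E),
    IsOpen U ∧ p ∈ U ∧ IsOpen V ∧ Φ p ∈ V ∧
    ContDiffOn ℝ (⊤ : ℕ∞) Φ U ∧ ContDiffOn ℝ (⊤ : ℕ∞) Φinv V ∧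
    Set.MapsTo Φ U V ∧ Set.MapsTo Φinv V U ∧
    (∀ x ∈ U, Φinv (Φ x) = x) ∧ (∀ y ∈ V, Φ (Φinv y) = y)

/-- 𝒜-equivalence of the germ of `f1` at `p1` and the germ of `f2` at `p2`. -/
def AEquiv (f1 : R2 → R3) (p1 : R2) (f2 : R2 → R3) (p2 : R2) : Prop :=
  ∃ (Φ : R2 → R2) (Ψ : R3 → R3),
    IsLocalDiffeoAt Φ p1 ∧ Φ p1 = p2 ∧
    IsLocalDiffeoAt Ψ (f1 p1) ∧ Ψ (f1 p1) = f2 p2 ∧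
    ∀ᶠ x in nhds p1, Ψ (f1 x) = f2 (Φ x)

/-- The canonical unit normal of a generalized timelike minimal surface. -/
def gtmsNormal (g1 g2 : ℝ → ℝ) (p : R2) : R3 :=
  (Real.sqrt ((1 - g1 p.1 * g2 p.2) ^ 2 + 2 * (g1 p.1 + g2 p.2) ^ 2))⁻¹ •
    (g1 p.1 + g2 p.2, -g1 p.1 + g2 p.2, 1 + g1 p.1 * g2 p.2)

/-- The signed area density function `λ = det(f_u, f_v, n)`. -/
def areaDensity (f : R2 → R3) (g1 g2 : ℝ → ℝ) (p : R2) : ℝ :=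
  det3 (pu f p) (pv f p) (gtmsNormal g1 g2 p)

/-- `f` is a front at `p`: the Legendrian lift `(f, n)` is an immersion at `p`,
where `n` is the canonical unit normal. -/
def IsFrontAt (f : R2 → R3) (g1 g2 : ℝ → ℝ) (p : R2) : Prop :=
  Function.Injective (fderiv ℝ (fun q => (f q, gtmsNormal g1 g2 q)) p)

/-- The differential of `f` at `p` has rank one. -/
def RankOne (f : R2 → R3) (p : R2) : Prop :=
  LinearMap.rank (fderiv ℝ f p).toLinearMap = 1

/-- Directional derivative of `F` along the vector field `X`. -/
def vD (X : R2 → R2) (F : R2 → R3) : R2 → R3 := fun q => fderiv ℝ F q (X q)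

/-- `φ_i = g_i' / (g_i² ω_i)`. -/
def phiW (g w : ℝ → ℝ) : ℝ → ℝ := fun t => deriv g t / (g t ^ 2 * w t)
/-- `Φ_i = (g_i/g_i') φ_i'`. -/
def PhiW (g w : ℝ → ℝ) : ℝ → ℝ := fun t => g t / deriv g t * deriv (phiW g w) t

/-- standard cuspidal butterfly -/
def fCBF : R2 → R3 := fun q =>
  (q.1, 5 * q.2 ^ 4 + 2 * q.1 * q.2, 4 * q.2 ^ 5 + q.1 * q.2 ^ 2 - q.1 ^ 2)
/-- standard cuspidal S₁⁺ singularity -/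
def fCS1p : R2 → R3 := fun q => (q.1, q.2 ^ 2, q.2 ^ 3 * (q.1 ^ 2 + q.2 ^ 2))
/-- standard cuspidal S₁⁻ singularity -/
def fCS1m : R2 → R3 := fun q => (q.1, q.2 ^ 2, q.2 ^ 3 * (q.1 ^ 2 - q.2 ^ 2))
/-- standard cuspidal edge -/
def fCE : R2 → R3 := fun q => (q.1, q.2 ^ 2, q.2 ^ 3)
/-- standard (2,5)-cuspidal edge -/
def fCE25 : R2 → R3 := fun q => (q.1, q.2 ^ 2, q.2 ^ 5)
/-- standard cuspidal beaks -/
def fCBK : R2 → R3 := fun q =>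
  (q.2, q.1 ^ 3 - q.1 * q.2 ^ 2, 3 * q.1 ^ 4 - 2 * q.1 ^ 2 * q.2 ^ 2)
/-- standard cuspidal lips -/
def fCLP : R2 → R3 := fun q =>
  (q.2, q.1 ^ 3 + q.1 * q.2 ^ 2, 3 * q.1 ^ 4 + 2 * q.1 ^ 2 * q.2 ^ 2)
/-- standard D₄⁺ singularity -/
def fD4p : R2 → R3 := fun q =>
  (q.1 * q.2, q.1 ^ 2 + 3 * q.2 ^ 2, q.1 ^ 2 * q.2 + q.2 ^ 3)
/-- standard D₄⁻ singularity -/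
def fD4m : R2 → R3 := fun q =>
  (q.1 * q.2, q.1 ^ 2 - 3 * q.2 ^ 2, q.1 ^ 2 * q.2 - q.2 ^ 3)

section Whitney

open Asymptotics Topology

/-- A smooth real function all of whose derivatives vanish at the origin. -/
structure IsFlat (h : ℝ → ℝ) : Prop where
  smooth : ContDiff ℝ (⊤ : ℕ∞) h
  iteratedDeriv_zero : ∀ n, iteratedDeriv n h 0 = 0

theorem isLittleO_sub_taylor {h : ℝ → ℝ} (hh : ContDiff ℝ (⊤ : ℕ∞) h) (n : ℕ) :
    (fun x => h x - ∑ k ∈ Finset.range (n + 1), (k.factorial : ℝ)⁻¹ * iteratedDeriv k h 0 * x ^ k)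
      =o[𝓝 0] fun x => x ^ n := by
  have := taylor_isLittleO_univ (x₀ := 0) (n := n) (hh.of_le (by exact_mod_cast le_top))
  simp only [taylor_within_apply, iteratedDerivWithin_univ, sub_zero, smul_eq_mul] at this
  refine this.congr_left fun x => ?_
  congr 1
  exact Finset.sum_congr rfl fun k _ => by ring

theorem IsFlat.isLittleO {h : ℝ → ℝ} (hh : IsFlat h) (n : ℕ) : h =o[𝓝 0] fun x => x ^ n := by
  simpa [hh.iteratedDeriv_zero] using isLittleO_sub_taylor hh.smooth n

theorem isBigO_pow_pow_nhds_zero {n N : ℕ} (hn : n ≤ N) :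
    (fun x : ℝ => x ^ N) =O[𝓝 0] fun x => x ^ n := by
  refine IsBigO.of_bound 1 ?_
  filter_upwards [Metric.ball_mem_nhds (0 : ℝ) one_pos] with x hx
  rw [one_mul, norm_pow, norm_pow]
  exact pow_le_pow_of_le_one (norm_nonneg x) (mem_ball_zero_iff.1 hx).le hn

theorem iteratedDeriv_eq_zero_of_isLittleO {h : ℝ → ℝ} (hh : ContDiff ℝ (⊤ : ℕ∞) h) {N : ℕ}
    (ho : h =o[𝓝 0] fun x => x ^ N) : ∀ n ≤ N, iteratedDeriv n h 0 = 0 := by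
  intro n
  induction n using Nat.strong_induction_on with
  | _ n ih =>
    intro hn
    have h1 := isLittleO_sub_taylor hh n
    rw [funext fun x : ℝ => congrArg (h x - ·) (Finset.sum_range_succ _ n)] at h1
    have h2 : ∀ x : ℝ, ∑ k ∈ Finset.range n, (k.factorial : ℝ)⁻¹ * iteratedDeriv k h 0 * x ^ k = 0 :=
      fun x => Finset.sum_eq_zero fun k hk => by
        have hk' := Finset.mem_range.1 hk
        rw [ih k hk' (by omega)]; ring
    have h3 : h =o[𝓝 0] fun x => x ^ n :=
      ho.trans_isBigO (isBigO_pow_pow_nhds_zero hn)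
    have h4 := h3.sub h1
    simp only [h2, zero_add, sub_sub_cancel] at h4
    by_contra hne
    set c : ℝ := (n.factorial : ℝ)⁻¹ * iteratedDeriv n h 0 with hc
    have hc0 : c ≠ 0 := mul_ne_zero (by positivity) hne
    have h5 : (fun x : ℝ => x ^ n) =o[𝓝 0] fun x => x ^ n := (isLittleO_const_mul_left_iff hc0).1 h4
    have h6 : ∃ᶠ x : ℝ in 𝓝[≠] 0, x ^ n ≠ 0 :=
      Eventually.frequently <| by
        filter_upwards [self_mem_nhdsWithin] with x hx
        exact pow_ne_zero n hx
    exact isLittleO_irrefl' (h6.filter_mono nhdsWithin_le_nhds |>.mono fun x hx => by simpa using hx)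
      h5

theorem IsFlat.isFlat_deriv {h : ℝ → ℝ} (hh : IsFlat h) : IsFlat (deriv h) where
  smooth := by
    have := hh.smooth
    exact (contDiff_infty_iff_deriv.1 this).2
  iteratedDeriv_zero n := by rw [← iteratedDeriv_succ']; exact hh.iteratedDeriv_zero _

theorem IsFlat.apply_zero {h : ℝ → ℝ} (hh : IsFlat h) : h 0 = 0 := by
  simpa using hh.iteratedDeriv_zero 0

theorem IsFlat.hasDerivAt_comp_sqrt_div {h : ℝ → ℝ} (hh : IsFlat h) (m : ℕ) (x : ℝ) :
    HasDerivAt (fun x => h √x / √x ^ m)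
      (deriv h √x / √x ^ (m + 1) / 2 - m / 2 * (h √x / √x ^ (m + 2))) x := by
  have h0 := hh.apply_zero
  have h0' := hh.isFlat_deriv.apply_zero
  rcases lt_trichotomy x 0 with hx | rfl | hx
  · simp only [Real.sqrt_eq_zero_of_nonpos hx.le, h0, h0', zero_div, mul_zero, sub_zero]
    refine (hasDerivAt_const x (0 : ℝ)).congr_of_eventuallyEq ?_
    filter_upwards [Iio_mem_nhds hx] with y hy
    simp [Real.sqrt_eq_zero_of_nonpos (le_of_lt hy), h0]
  · simp only [Real.sqrt_zero, h0, h0', zero_div, mul_zero, sub_zero]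
    have h1 : (fun x => h √x) =o[𝓝 0] fun x => √x ^ (m + 4) :=
      (hh.isLittleO (m + 4)).comp_tendsto (by simpa using Real.continuous_sqrt.tendsto 0)
    have h2 : (fun x => h √x / √x ^ m) =O[𝓝 0] fun x : ℝ => ‖x - 0‖ ^ 2 := by
      obtain ⟨C, hC0, hC⟩ := h1.isBigO.exists_pos
      rw [isBigOWith_iff] at hC
      refine IsBigO.of_bound C ?_
      filter_upwards [hC] with y hy
      rcases le_or_gt y 0 with hy0 | hy0
      · simp only [Real.sqrt_eq_zero_of_nonpos hy0, h0, zero_div, norm_zero]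
        positivity
      · have hs : 0 < √y := Real.sqrt_pos.2 hy0
        rw [norm_div, div_le_iff₀ (norm_pos_iff.2 (pow_pos hs m).ne')]
        refine hy.trans (le_of_eq ?_)
        simp only [norm_pow, sub_zero, Real.norm_eq_abs, abs_of_pos hs, abs_of_pos hy0]
        have h3 : y ^ 2 = √y ^ 4 := by
          rw [show 4 = 2 * 2 from rfl, pow_mul, Real.sq_sqrt hy0.le]
        rw [h3]
        ring
    simpa using (IsBigO.hasFDerivAt (𝕜 := ℝ) h2 one_lt_two).hasDerivAt
  · have hs : 0 < √x := Real.sqrt_pos.2 hx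
    have hd : HasDerivAt h (deriv h √x) √x :=
      (hh.smooth.differentiable (by simp) _).hasDerivAt
    have h1 := (hd.comp x (Real.hasDerivAt_sqrt hx.ne')).div
      ((Real.hasDerivAt_sqrt hx.ne').pow m) (pow_pos hs m).ne'
    refine h1.congr_deriv ?_
    rcases m with _ | m
    · simp; field_simp
    · simp only [Function.comp, Pi.pow_apply, Nat.add_sub_cancel]
      field_simp
      push_cast
      ring

theorem IsFlat.contDiff_comp_sqrt_div {h : ℝ → ℝ} (hh : IsFlat h) (m : ℕ) :
    ContDiff ℝ (⊤ : ℕ∞) fun x => h √x / √x ^ m := by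
  refine contDiff_infty.2 fun n => ?_
  induction n generalizing h m with
  | zero =>
    exact contDiff_zero.2 (continuous_iff_continuousAt.2 fun x =>
      (hh.hasDerivAt_comp_sqrt_div m x).continuousAt)
  | succ n ih =>
    push_cast
    refine contDiff_succ_iff_deriv.2
      ⟨fun x => (hh.hasDerivAt_comp_sqrt_div m x).differentiableAt, by simp, ?_⟩
    rw [funext fun x => (hh.hasDerivAt_comp_sqrt_div m x).deriv]
    exact ((ih hh.isFlat_deriv (m + 1)).div_const 2).sub (contDiff_const.mul (ih hh (m + 2)))

/-- **Borel's lemma**: every formal power series is the Taylor series of a smooth function. -/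
theorem exists_contDiff_isBigO_sub_sum (c : ℕ → ℝ) :
    ∃ b : ℝ → ℝ, ContDiff ℝ (⊤ : ℕ∞) b ∧ ∀ N : ℕ,
      (fun y => b y - ∑ k ∈ Finset.range (N + 1), c k * y ^ k) =O[𝓝 0] fun y => y ^ N := by
  let χ : ContDiffBump (0 : ℝ) := ⟨1 / 2, 1, by norm_num, by norm_num⟩
  let ψ : ℕ → ℝ → ℝ := fun k y => y ^ k * χ y
  have hψ : ∀ k, ContDiff ℝ (⊤ : ℕ∞) (ψ k) := fun k => (contDiff_id.pow k).mul χ.contDiff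
  have hψc : ∀ k, HasCompactSupport (ψ k) := fun k => χ.hasCompactSupport.mul_left
  have hbound : ∀ k j : ℕ, ∃ C : ℝ, ∀ y, ‖iteratedFDeriv ℝ j (ψ k) y‖ ≤ C := fun k j =>
    ((hψ k).continuous_iteratedFDeriv (by exact_mod_cast le_top)).bounded_above_of_compact_support
      ((hψc k).iteratedFDeriv j)
  choose C hC using hbound
  have hC0 : ∀ k j, 0 ≤ C k j := fun k j => (norm_nonneg _).trans (hC k j 0)
  let M : ℕ → ℝ := fun k => 1 + ∑ j ∈ Finset.range k, C k j
  have hM1 : ∀ k, 1 ≤ M k := fun k => le_add_of_nonneg_right (Finset.sum_nonneg fun j _ => hC0 k j)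
  have hCM : ∀ k j, j < k → C k j ≤ M k := fun k j hj =>
    (Finset.single_le_sum (fun i _ => hC0 k i) (Finset.mem_range.2 hj)).trans
      (le_add_of_nonneg_left zero_le_one)
  let δ : ℕ → ℝ := fun k => 1 + |c k| * M k * 2 ^ k
  have hδ1 : ∀ k, 1 ≤ δ k := fun k => by
    have := hM1 k
    exact le_add_of_nonneg_right (by positivity)
  have hδ0 : ∀ k, 0 < δ k := fun k => one_pos.trans_le (hδ1 k)
  have hδ : ∀ k, |c k| * M k * (δ k)⁻¹ ≤ (1 / 2) ^ k := fun k => by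
    rw [← div_eq_mul_inv, div_le_iff₀ (hδ0 k)]
    have h2 : (1 / 2 : ℝ) ^ k * 2 ^ k = 1 := by rw [← mul_pow]; norm_num
    have : (1 / 2 : ℝ) ^ k * δ k = (1 / 2) ^ k + |c k| * M k * ((1 / 2) ^ k * 2 ^ k) := by
      simp only [δ]; ring
    rw [this, h2, mul_one]
    exact le_add_of_nonneg_left (by positivity)
  have hpow : ∀ k j, j < k → (δ k) ^ j * ((δ k) ^ k)⁻¹ ≤ (δ k)⁻¹ := fun k j hj => by
    rw [← div_eq_mul_inv, div_le_iff₀ (pow_pos (hδ0 k) k), inv_mul_eq_div, le_div_iff₀ (hδ0 k),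
      ← pow_succ]
    exact pow_le_pow_right₀ (hδ1 k) hj
  let F : ℕ → ℝ → ℝ := fun k y => c k * ((δ k) ^ k)⁻¹ * ψ k (δ k * y)
  have hF : ∀ k, ContDiff ℝ (⊤ : ℕ∞) (F k) := fun k =>
    contDiff_const.mul ((hψ k).comp (contDiff_const.mul contDiff_id))
  have hFeq : ∀ k y, F k y = c k * y ^ k * χ (δ k * y) := fun k y => by
    have := (hδ0 k).ne'
    simp only [F, ψ]
    rw [mul_pow]
    field_simp
  have hFj : ∀ k j y, j < k → ‖iteratedFDeriv ℝ j (F k) y‖ ≤ (1 / 2) ^ k := fun k j y hj => by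
    have h1 : iteratedDeriv j (F k) y
        = c k * ((δ k) ^ k)⁻¹ * (δ k ^ j * iteratedDeriv j (ψ k) (δ k * y)) := by
      simp only [F]
      rw [iteratedDeriv_const_mul_field, iteratedDeriv_comp_const_mul
        ((hψ k).of_le (by exact_mod_cast le_top))]
    rw [norm_iteratedFDeriv_eq_norm_iteratedDeriv, h1]
    have h2 := (hC k j (δ k * y)).trans (hCM k j hj)
    rw [norm_iteratedFDeriv_eq_norm_iteratedDeriv] at h2
    have hδk := hδ0 k
    rw [norm_mul, norm_mul, norm_mul, norm_inv, norm_pow, norm_pow, Real.norm_eq_abs (δ k),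
      abs_of_pos hδk, Real.norm_eq_abs (c k)]
    calc |c k| * ((δ k) ^ k)⁻¹ * (δ k ^ j * ‖iteratedDeriv j (ψ k) (δ k * y)‖)
        = |c k| * ‖iteratedDeriv j (ψ k) (δ k * y)‖ * (δ k ^ j * ((δ k) ^ k)⁻¹) := by ring
      _ ≤ |c k| * M k * (δ k)⁻¹ := by
          have := hpow k j hj
          have := hM1 k
          gcongr
      _ ≤ _ := hδ k
  have hgeo : Summable fun k : ℕ => (1 / 2 : ℝ) ^ k := summable_geometric_two
  refine ⟨fun y => ∑' k, F k y, ?_, fun N => ?_⟩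
  · refine contDiff_tsum_of_eventually (v := fun _ k => (1 / 2 : ℝ) ^ k) hF (fun _ _ => hgeo)
      fun j _ => ?_
    rw [Nat.cofinite_eq_atTop]
    filter_upwards [eventually_gt_atTop j] with k hk y using hFj k j y hk
  · have hone : ∀ᶠ y in 𝓝 (0 : ℝ), ∀ k ∈ Finset.range (N + 1), F k y = c k * y ^ k := by
      rw [Filter.eventually_all_finset]
      intro k _
      have : Tendsto (fun y : ℝ => δ k * y) (𝓝 0) (𝓝 0) := by
        simpa using (continuous_const_mul (δ k)).tendsto 0
      filter_upwards [this.eventually χ.eventuallyEq_one] with y hy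
      rw [hFeq, hy]; simp
    refine IsBigO.of_bound 2 ?_
    filter_upwards [hone] with y hy
    have hle : ∀ k, ‖F (k + (N + 1)) y‖ ≤ (1 / 2) ^ k * |y| ^ N := fun k => by
      set K := k + (N + 1) with hK
      rw [hFeq]
      by_cases hc : 1 ≤ |δ K * y|
      · have : χ (δ K * y) = 0 := χ.zero_of_le_dist (by simpa using hc)
        rw [this, mul_zero, norm_zero]
        positivity
      · have hδK := hδ0 K
        have h1 : |y| ≤ (δ K)⁻¹ := by
          rw [abs_mul, abs_of_pos hδK, not_le] at hc
          rw [inv_eq_one_div, le_div_iff₀ hδK]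
          linarith
        have h2 : |y| ≤ 1 := h1.trans (inv_le_one_of_one_le₀ (hδ1 K))
        have h3 : |χ (δ K * y)| ≤ 1 := by rw [abs_of_nonneg χ.nonneg]; exact χ.le_one
        rw [norm_mul, norm_mul, norm_pow, Real.norm_eq_abs, Real.norm_eq_abs, Real.norm_eq_abs]
        calc |c K| * |y| ^ K * |χ (δ K * y)| ≤ |c K| * |y| ^ K * 1 := by gcongr
          _ = |c K| * (|y| ^ k * |y|) * |y| ^ N := by rw [hK]; ring
          _ ≤ |c K| * (1 * (δ K)⁻¹) * |y| ^ N := by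
              have := pow_le_one₀ (n := k) (abs_nonneg y) h2
              gcongr
          _ ≤ |c K| * M K * (δ K)⁻¹ * |y| ^ N := by
              have := hM1 K
              have h4 : |c K| * (1 * (δ K)⁻¹) ≤ |c K| * M K * (δ K)⁻¹ := by
                rw [mul_assoc]; gcongr
              gcongr
          _ ≤ (1 / 2) ^ K * |y| ^ N := by gcongr; exact hδ K
          _ ≤ (1 / 2) ^ k * |y| ^ N := by
              gcongr ?_ * _
              exact pow_le_pow_of_le_one (by norm_num) (by norm_num) (by omega)
    have hs : Summable fun k => F (k + (N + 1)) y :=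
      .of_norm_bounded (hgeo.mul_right _) hle
    have hsum : Summable fun k => F k y := (summable_nat_add_iff (N + 1)).1 hs
    rw [← hsum.sum_add_tsum_nat_add (N + 1), Finset.sum_congr rfl hy, add_sub_cancel_left]
    refine (tsum_of_norm_bounded (hasSum_geometric_two.mul_right (|y| ^ N)) hle).trans ?_
    simp

theorem exists_comp_sq_add_pow_five_mul {a : ℝ → ℝ} (ha : ContDiff ℝ (⊤ : ℕ∞) a)
    (h1 : iteratedDeriv 1 a 0 = 0) (h3 : iteratedDeriv 3 a 0 = 0) :
    ∃ E O : ℝ → ℝ, ContDiff ℝ (⊤ : ℕ∞) E ∧ ContDiff ℝ (⊤ : ℕ∞) O ∧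
      ∀ s, a s = E (s ^ 2) + s ^ 5 * O (s ^ 2) := by
  let c : ℕ → ℝ := fun k => (k.factorial : ℝ)⁻¹ * iteratedDeriv k a 0
  obtain ⟨b₀, hb₀, hb₀'⟩ := exists_contDiff_isBigO_sub_sum fun k => c (2 * k)
  obtain ⟨b₁, hb₁, hb₁'⟩ := exists_contDiff_isBigO_sub_sum fun k => c (2 * k + 5)
  let r : ℝ → ℝ := fun s => a s - b₀ (s ^ 2) - s ^ 5 * b₁ (s ^ 2)
  have hr : ContDiff ℝ (⊤ : ℕ∞) r :=
    (ha.sub (hb₀.comp (contDiff_id.pow 2))).sub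
      ((contDiff_id.pow 5).mul (hb₁.comp (contDiff_id.pow 2)))
  have hsum : ∀ (M : ℕ) (s : ℝ), ∑ k ∈ Finset.range (2 * M), c k * s ^ k =
      ∑ k ∈ Finset.range M, c (2 * k) * (s ^ 2) ^ k
        + s * ∑ k ∈ Finset.range M, c (2 * k + 1) * (s ^ 2) ^ k := fun M s => by
    induction M with
    | zero => simp
    | succ M ih =>
      rw [Nat.mul_succ, Finset.sum_range_succ, Finset.sum_range_succ, ih, Finset.sum_range_succ,
        Finset.sum_range_succ]
      ring
  have hsq : Tendsto (fun s : ℝ => s ^ 2) (𝓝 0) (𝓝 0) := by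
    simpa using (continuous_pow 2).tendsto (0 : ℝ)
  have hro : ∀ n : ℕ, r =o[𝓝 0] fun s => s ^ n := fun n => by
    have e1 := (isLittleO_sub_taylor ha (2 * n + 5)).isBigO.trans
      (isBigO_pow_pow_nhds_zero (by omega : n + 1 ≤ 2 * n + 5))
    have e2 := ((hb₀' (n + 2)).comp_tendsto hsq).trans
      ((isBigO_pow_pow_nhds_zero (by omega : n + 1 ≤ 2 * (n + 2))).congr_left
        fun s => by simp [pow_mul])
    have e3 := ((isBigO_refl (fun s : ℝ => s ^ 5) (𝓝 0)).mul
      ((hb₁' n).comp_tendsto hsq)).trans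
      ((isBigO_pow_pow_nhds_zero (by omega : n + 1 ≤ 5 + 2 * n)).congr_left
        fun s => by simp [pow_add, pow_mul])
    refine (((e1.sub e2).sub e3).congr_left fun s => ?_).trans_isLittleO
      (isLittleO_pow_pow (Nat.lt_succ_self n))
    have h4 := hsum (n + 3) s
    have h5 : ∑ k ∈ Finset.range (n + 3), c (2 * k + 1) * (s ^ 2) ^ k =
        s ^ 4 * ∑ k ∈ Finset.range (n + 1), c (2 * k + 5) * (s ^ 2) ^ k := by
      rw [Finset.sum_range_succ', Finset.sum_range_succ', Finset.mul_sum]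
      have c1 : c 1 = 0 := by simp only [c, h1, mul_zero]
      have c3 : c 3 = 0 := by simp only [c, h3, mul_zero]
      simp only [Nat.zero_add, Nat.mul_zero, Nat.mul_one, c1, c3, zero_mul, add_zero]
      refine Finset.sum_congr rfl fun k _ => ?_
      rw [show 2 * (k + 1 + 1) + 1 = 2 * k + 5 by ring]
      ring
    rw [h5] at h4
    simp only [Function.comp, r]
    rw [show 2 * n + 5 + 1 = 2 * (n + 3) by ring, h4]
    ring
  have hflat : IsFlat r := ⟨hr, fun n => iteratedDeriv_eq_zero_of_isLittleO hr (hro n) n le_rfl⟩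
  have hneg : ContDiff ℝ (⊤ : ℕ∞) fun s => r (-s) := hr.comp contDiff_neg
  have hflat_neg : IsFlat fun s => r (-s) := ⟨hneg, fun n =>
    iteratedDeriv_eq_zero_of_isLittleO hneg (N := n) (by
      have := (hro n).comp_tendsto (k := fun s : ℝ => -s) (by simpa using continuous_neg.tendsto (0 : ℝ))
      refine this.trans_isBigO (IsBigO.of_bound 1 (Eventually.of_forall fun s => by simp))) n le_rfl⟩
  refine ⟨fun y => b₀ y + (r √y / √y ^ 0 + r (-√y) / √y ^ 0) / 2,
    fun y => b₁ y + (r √y / √y ^ 5 - r (-√y) / √y ^ 5) / 2,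
    hb₀.add (((hflat.contDiff_comp_sqrt_div 0).add (hflat_neg.contDiff_comp_sqrt_div 0)).div_const 2),
    hb₁.add (((hflat.contDiff_comp_sqrt_div 5).sub (hflat_neg.contDiff_comp_sqrt_div 5)).div_const 2),
    fun s => ?_⟩
  have har : a s = r s + b₀ (s ^ 2) + s ^ 5 * b₁ (s ^ 2) := by simp only [r]; ring
  have hr0 := hflat.apply_zero
  rw [har]
  beta_reduce
  rw [Real.sqrt_sq_eq_abs]
  rcases lt_trichotomy s 0 with hs | rfl | hs
  · rw [abs_of_neg hs]
    have := hs.ne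
    field_simp
    ring_nf
  · simp [hr0]
  · rw [abs_of_pos hs]
    field_simp
    ring

/-- A function that is smooth near the origin agrees there with a globally smooth one. -/
theorem exists_contDiff_eventuallyEq {a : ℝ → ℝ} {U : Set ℝ} (hU : IsOpen U) (h0 : 0 ∈ U)
    (ha : ContDiffOn ℝ (⊤ : ℕ∞) a U) :
    ∃ b : ℝ → ℝ, ContDiff ℝ (⊤ : ℕ∞) b ∧ b =ᶠ[𝓝 0] a := by
  obtain ⟨ε, hε, hεU⟩ := Metric.isOpen_iff.1 hU 0 h0
  let χ : ContDiffBump (0 : ℝ) := ⟨ε / 4, ε / 2, by positivity, by linarith⟩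
  refine ⟨fun s => χ s * a s, contDiff_iff_contDiffAt.2 fun s => ?_, ?_⟩
  · by_cases hs : s ∈ Metric.closedBall (0 : ℝ) (ε / 2)
    · exact χ.contDiffAt.mul (ha.contDiffAt (hU.mem_nhds
        (hεU (Metric.closedBall_subset_ball (by linarith) hs))))
    · refine (contDiffAt_const (c := (0 : ℝ))).congr_of_eventuallyEq ?_
      filter_upwards [Metric.isClosed_closedBall.isOpen_compl.mem_nhds hs] with t ht
      rw [χ.zero_of_le_dist (by simpa using (le_of_lt (by simpa using ht))), zero_mul]
  · filter_upwards [χ.eventuallyEq_one] with s hs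
    rw [hs]; simp

theorem exists_eventually_eq_comp_sq_add {a : ℝ → ℝ} {U : Set ℝ} (hU : IsOpen U) (h0 : 0 ∈ U)
    (ha : ContDiffOn ℝ (⊤ : ℕ∞) a U) {μ : ℝ}
    (hμ : (fun s => a s - μ * s ^ 2) =o[𝓝 0] fun s => s ^ 3) :
    ∃ E O : ℝ → ℝ, ContDiff ℝ (⊤ : ℕ∞) E ∧ ContDiff ℝ (⊤ : ℕ∞) O ∧
      ∀ᶠ s in 𝓝 0, a s = E (s ^ 2) + s ^ 5 * O (s ^ 2) := by
  obtain ⟨b, hb, hba⟩ := exists_contDiff_eventuallyEq hU h0 ha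
  have hc : ContDiff ℝ (⊤ : ℕ∞) fun s => b s - μ * s ^ 2 :=
    hb.sub (contDiff_const.mul (contDiff_id.pow 2))
  have hco : (fun s => b s - μ * s ^ 2) =o[𝓝 0] fun s => s ^ 3 :=
    hμ.congr' (by filter_upwards [hba] with s hs; rw [hs]) EventuallyEq.rfl
  have hz := iteratedDeriv_eq_zero_of_isLittleO hc hco
  obtain ⟨E, O, hE, hO, hEO⟩ := exists_comp_sq_add_pow_five_mul hc (hz 1 (by norm_num)) (hz 3 le_rfl)
  refine ⟨fun y => E y + μ * y, O, hE.add (contDiff_const.mul contDiff_id), hO, ?_⟩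
  filter_upwards [hba] with s hs
  rw [← hs]
  linear_combination hEO s

end Whitney

section Core

open Asymptotics Topology

variable {E : Type*} [NormedAddCommGroup E] [NormedSpace ℝ E]
  {F : Type*} [NormedAddCommGroup F] [NormedSpace ℝ F]

/-- The **inverse function theorem** in the form of `IsLocalDiffeoAt`. -/
theorem isLocalDiffeoAt_of_injective_fderiv [FiniteDimensional ℝ E] {Φ : E → E} {U : Set E} {p : E}
    (hU : IsOpen U) (hp : p ∈ U) (hΦ : ContDiffOn ℝ (⊤ : ℕ∞) Φ U)
    (hinj : Function.Injective (fderiv ℝ Φ p)) : IsLocalDiffeoAt Φ p := by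
  have : CompleteSpace E := FiniteDimensional.complete ℝ E
  have hn : ((⊤ : ℕ∞) : WithTop ℕ∞) ≠ 0 := by simp
  have hat : ∀ x ∈ U, ContDiffAt ℝ (⊤ : ℕ∞) Φ x := fun x hx => hΦ.contDiffAt (hU.mem_nhds hx)
  have hd : ∀ x ∈ U, HasFDerivAt Φ (fderiv ℝ Φ x) x := fun x hx =>
    ((hat x hx).differentiableAt hn).hasFDerivAt
  let R : Set (E →L[ℝ] E) := Set.range ((↑) : (E ≃L[ℝ] E) → E →L[ℝ] E)
  have hpR : fderiv ℝ Φ p ∈ R :=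
    ⟨(LinearEquiv.ofInjectiveEndo (fderiv ℝ Φ p).toLinearMap hinj).toContinuousLinearEquiv, by
      ext x; rfl⟩
  obtain ⟨e, he⟩ := hpR
  let P := (hat p hp).toOpenPartialHomeomorph Φ (he ▸ hd p hp) hn
  have hPp : p ∈ P.source := (hat p hp).mem_toOpenPartialHomeomorph_source (he ▸ hd p hp) hn
  have hcoe : ∀ x, P x = Φ x := fun x => rfl
  let S : Set E := U ∩ fderiv ℝ Φ ⁻¹' R
  have hS : IsOpen S :=
    (hΦ.continuousOn_fderiv_of_isOpen hU (by exact_mod_cast le_top)).isOpen_inter_preimage hU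
      ContinuousLinearEquiv.isOpen
  have hpS : p ∈ S := ⟨hp, e, he⟩
  refine ⟨P.source ∩ S, P.target ∩ P.symm ⁻¹' S, P.symm, P.open_source.inter hS, ⟨hPp, hpS⟩,
    P.isOpen_inter_preimage_symm hS, ⟨P.map_source hPp, ?_⟩, hΦ.mono fun x hx => hx.2.1, ?_, ?_, ?_,
    fun x hx => P.left_inv hx.1, fun y hy => P.right_inv hy.1⟩
  · rw [← hcoe, Set.mem_preimage, P.left_inv hPp]; exact hpS
  · intro y hy
    obtain ⟨e', he'⟩ := hy.2.2
    exact (P.contDiffAt_symm hy.1 (f₀' := e') (he' ▸ hd _ hy.2.1) (hat _ hy.2.1)).contDiffWithinAt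
  · intro x hx
    refine ⟨P.map_source hx.1, ?_⟩
    rw [← hcoe, Set.mem_preimage, P.left_inv hx.1]; exact hx.2
  · intro y hy
    exact ⟨P.map_target hy.1, hy.2⟩

theorem isBigO_sub_fderiv {Ψ : E → F} {U : Set E} {x₀ : E} (hU : IsOpen U) (hx₀ : x₀ ∈ U)
    (hΨ : ContDiffOn ℝ (⊤ : ℕ∞) Ψ U) :
    (fun x => Ψ x - Ψ x₀ - fderiv ℝ Ψ x₀ (x - x₀)) =O[𝓝 x₀] fun x => ‖x - x₀‖ ^ 2 := by
  have hat : ∀ x ∈ U, ContDiffAt ℝ (⊤ : ℕ∞) Ψ x := fun x hx => hΨ.contDiffAt (hU.mem_nhds hx)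
  have h1 : DifferentiableAt ℝ (fderiv ℝ Ψ) x₀ :=
    ((hat x₀ hx₀).fderiv_right (m := (⊤ : ℕ∞)) (by simp)).differentiableAt (by simp)
  obtain ⟨C, hC0, hC⟩ := h1.isBigO_sub.exists_pos
  rw [isBigOWith_iff] at hC
  obtain ⟨ε, hε, hεC⟩ := Metric.eventually_nhds_iff_ball.1 (hC.and (hU.mem_nhds hx₀))
  refine IsBigO.of_bound C ?_
  filter_upwards [Metric.ball_mem_nhds x₀ hε] with x hx
  have hsub : ∀ y ∈ Metric.closedBall x₀ ‖x - x₀‖, y ∈ Metric.ball x₀ ε := fun y hy => by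
    rw [mem_ball_iff_norm] at hx ⊢
    exact (mem_closedBall_iff_norm.1 hy).trans_lt hx
  have := (convex_closedBall x₀ ‖x - x₀‖).norm_image_sub_le_of_norm_fderiv_le' (𝕜 := ℝ) (f := Ψ)
    (φ := fderiv ℝ Ψ x₀) (C := C * ‖x - x₀‖) (x := x₀) (y := x)
    (fun y hy => (hat y (hεC y (hsub y hy)).2).differentiableAt (by simp))
    (fun y hy => (hεC y (hsub y hy)).1.trans (by
      gcongr; exact mem_closedBall_iff_norm.1 hy))
    (Metric.mem_closedBall_self (norm_nonneg _)) (mem_closedBall_iff_norm.2 le_rfl)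
  refine this.trans (le_of_eq ?_)
  rw [norm_pow, norm_norm]
  ring

theorem eq_zero_of_mul_pow_isLittleO {c : ℝ} {n : ℕ}
    (h : (fun t : ℝ => c * t ^ n) =o[𝓝 0] fun t => t ^ n) : c = 0 := by
  by_contra hc
  have h6 : ∃ᶠ x : ℝ in 𝓝[≠] 0, x ^ n ≠ 0 :=
    Eventually.frequently <| by
      filter_upwards [self_mem_nhdsWithin] with x hx
      exact pow_ne_zero n hx
  exact isLittleO_irrefl' (h6.filter_mono nhdsWithin_le_nhds |>.mono fun x hx => by simpa using hx)
    ((isLittleO_const_mul_left_iff hc).1 h)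

theorem eq_zero_of_sq_add_cube_isLittleO {α β : ℝ}
    (h : (fun t : ℝ => α * t ^ 2 + β * t ^ 3) =o[𝓝 0] fun t => t ^ 3) : α = 0 ∧ β = 0 := by
  have h1 : (fun t : ℝ => β * t ^ 3) =o[𝓝 0] fun t => t ^ 2 :=
    (isLittleO_pow_pow (by norm_num : 2 < 3)).const_mul_left β
  have h2 := (h.trans (isLittleO_pow_pow (by norm_num : 2 < 3))).sub h1
  have hα : α = 0 := eq_zero_of_mul_pow_isLittleO (n := 2) (by simpa using h2)
  subst hα
  exact ⟨rfl, eq_zero_of_mul_pow_isLittleO (n := 3) (by simpa using h)⟩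

/-- Taylor expansion of order three of a smooth curve with a singular point at `0`, composed with a
smooth map. -/
theorem isLittleO_comp_singular_curve {A : ℝ → E} (hA : ContDiff ℝ (⊤ : ℕ∞) A) (hA1 : deriv A 0 = 0)
    {Ψ : E → F} {U : Set E} (hU : IsOpen U) (h0 : A 0 ∈ U) (hΨ : ContDiffOn ℝ (⊤ : ℕ∞) Ψ U) :
    (fun t : ℝ => Ψ (A t) - Ψ (A 0) - ((t ^ 2 / 2) • fderiv ℝ Ψ (A 0) (iteratedDeriv 2 A 0)
      + (t ^ 3 / 6) • fderiv ℝ Ψ (A 0) (iteratedDeriv 3 A 0))) =o[𝓝 0] fun t => t ^ 3 := by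
  set L := fderiv ℝ Ψ (A 0)
  have h1 : (fun t : ℝ => A t - A 0 - ((t ^ 2 / 2) • iteratedDeriv 2 A 0
      + (t ^ 3 / 6) • iteratedDeriv 3 A 0)) =o[𝓝 0] fun t => t ^ 3 := by
    have := taylor_isLittleO_univ (x₀ := 0) (n := 3) (contDiff_infty.1 hA 3)
    simp only [taylor_within_apply, iteratedDerivWithin_univ, sub_zero, Finset.sum_range_succ,
      Finset.sum_range_zero, Nat.factorial, iteratedDeriv_zero, iteratedDeriv_one, hA1] at this
    refine this.congr_left fun t => ?_
    norm_num
    module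
  have h2 : (fun t : ℝ => A t - A 0) =O[𝓝 0] fun t => t ^ 2 := by
    have e1 : (fun t : ℝ => (t ^ 2 / 2) • iteratedDeriv 2 A 0) =O[𝓝 0] fun t => t ^ 2 := by
      refine IsBigO.of_bound (‖iteratedDeriv 2 A 0‖ / 2) (Eventually.of_forall fun t => le_of_eq ?_)
      rw [norm_smul, norm_div, Real.norm_two]; ring
    have e2 : (fun t : ℝ => (t ^ 3 / 6) • iteratedDeriv 3 A 0) =O[𝓝 0] fun t => t ^ 3 := by
      refine IsBigO.of_bound (‖iteratedDeriv 3 A 0‖ / 6) (Eventually.of_forall fun t => le_of_eq ?_)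
      rw [norm_smul, norm_div, show ‖(6 : ℝ)‖ = 6 by norm_num]; ring
    have e3 : (fun t : ℝ => t ^ 3) =O[𝓝 0] fun t => t ^ 2 := isBigO_pow_pow_nhds_zero (by norm_num)
    exact ((h1.isBigO.trans e3).add (e1.add (e2.trans e3))).congr_left fun t => by abel
  have h3 : (fun t : ℝ => Ψ (A t) - Ψ (A 0) - L (A t - A 0)) =o[𝓝 0] fun t => t ^ 3 := by
    have := (isBigO_sub_fderiv hU h0 hΨ).comp_tendsto (hA.continuous.tendsto 0)
    refine (this.trans (h2.norm_left.pow 2)).trans_isLittleO ?_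
    simpa only [← pow_mul] using isLittleO_pow_pow (by norm_num : 3 < 2 * 2)
  have h4 := (L.isBigO_comp _ _).trans_isLittleO h1
  refine (h3.add h4).congr_left fun t => ?_
  simp only [map_sub, map_add, map_smul]
  abel

theorem fderiv_fderiv_of_leftInverse {Φ : E → F} {Φinv : F → E} {U : Set E} {V : Set F} {p : E}
    (hU : IsOpen U) (hp : p ∈ U) (hV : IsOpen V) (hpV : Φ p ∈ V)
    (hΦ : ContDiffOn ℝ (⊤ : ℕ∞) Φ U) (hΦinv : ContDiffOn ℝ (⊤ : ℕ∞) Φinv V)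
    (h : ∀ x ∈ U, Φinv (Φ x) = x) (w : E) :
    fderiv ℝ Φinv (Φ p) (fderiv ℝ Φ p w) = w := by
  have h1 := ((hΦ.contDiffAt (hU.mem_nhds hp)).differentiableAt (by simp)).hasFDerivAt
  have h2 := ((hΦinv.contDiffAt (hV.mem_nhds hpV)).differentiableAt (by simp)).hasFDerivAt
  have h3 : HasFDerivAt (fun x => Φinv (Φ x)) (ContinuousLinearMap.id ℝ E) p :=
    (hasFDerivAt_id p).congr_of_eventuallyEq (by filter_upwards [hU.mem_nhds hp] with x hx using h x hx)
  simpa using congrArg (fun T : E →L[ℝ] E => T w) ((h2.comp p h1).unique h3)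

/-- If `x = μ y² + o(t³)` and `y` is a local coordinate, then `x` is a smooth function of
`(y², y⁵)`. -/
theorem exists_eq_of_sub_sq_isLittleO {x y : ℝ → ℝ} {I : Set ℝ} (hI : IsOpen I) (h0 : 0 ∈ I)
    (hx : ContDiffOn ℝ (⊤ : ℕ∞) x I) (hy : ContDiffOn ℝ (⊤ : ℕ∞) y I) (hy0 : y 0 = 0)
    (hy1 : deriv y 0 ≠ 0) {μ : ℝ} (hμ : (fun t => x t - μ * y t ^ 2) =o[𝓝 0] fun t => t ^ 3) :
    ∃ E O : ℝ → ℝ, ContDiff ℝ (⊤ : ℕ∞) E ∧ ContDiff ℝ (⊤ : ℕ∞) O ∧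
      ∀ᶠ t in 𝓝 0, x t = E (y t ^ 2) + y t ^ 5 * O (y t ^ 2) := by
  have hinj : Function.Injective (fderiv ℝ y 0) := by
    refine (injective_iff_map_eq_zero _).2 fun h hh => ?_
    rw [fderiv_eq_smul_deriv, smul_eq_mul] at hh
    exact (mul_eq_zero.1 hh).resolve_right hy1
  obtain ⟨U, V, σ, hU, h0U, hV, h0V, -, hσ, -, hσm, hl, hr⟩ :=
    isLocalDiffeoAt_of_injective_fderiv hI h0 hy hinj
  rw [hy0] at h0V
  have hσ0 : σ 0 = 0 := by simpa only [hy0] using hl 0 h0U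
  have hσd := (hσ.contDiffAt (hV.mem_nhds h0V)).differentiableAt (by simp)
  have hσt : Tendsto σ (𝓝 0) (𝓝 0) := by simpa [hσ0] using hσd.continuousAt.tendsto
  have hσO : σ =O[𝓝 0] fun s => s := by simpa [hσ0] using hσd.isBigO_sub
  have hW : IsOpen (V ∩ σ ⁻¹' I) := hσ.continuousOn.isOpen_inter_preimage hV hI
  have ha : ContDiffOn ℝ (⊤ : ℕ∞) (fun s => x (σ s)) (V ∩ σ ⁻¹' I) :=
    hx.comp (hσ.mono Set.inter_subset_left) fun s hs => hs.2
  have hao : (fun s => x (σ s) - μ * s ^ 2) =o[𝓝 0] fun s => s ^ 3 := by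
    refine ((hμ.comp_tendsto hσt).congr' ?_ EventuallyEq.rfl).trans_isBigO (hσO.pow 3)
    filter_upwards [hV.mem_nhds h0V] with s hs
    simp only [Function.comp, hr s hs]
  obtain ⟨E, O, hE, hO, hEO⟩ :=
    exists_eventually_eq_comp_sq_add hW ⟨h0V, by simpa [hσ0] using h0⟩ ha hao
  refine ⟨E, O, hE, hO, ?_⟩
  have hyt : Tendsto y (𝓝 0) (𝓝 0) := by
    simpa [hy0] using (hy.contDiffAt (hI.mem_nhds h0)).continuousAt.tendsto
  filter_upwards [hyt.eventually hEO, hU.mem_nhds h0U] with t ht htU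
  rwa [hl t htU] at ht

theorem hasFDerivAt_fCE25 (q : R2) (hq : q.2 = 0) :
    HasFDerivAt fCE25 ((ContinuousLinearMap.fst ℝ ℝ ℝ).prod (0 : R2 →L[ℝ] R2)) q := by
  have h1 : HasFDerivAt (fun q : R2 => q.1) (ContinuousLinearMap.fst ℝ ℝ ℝ) q := hasFDerivAt_fst
  have h2 : HasFDerivAt (fun q : R2 => q.2) (ContinuousLinearMap.snd ℝ ℝ ℝ) q := hasFDerivAt_snd
  refine (h1.prodMk ((h2.pow 2).prodMk (h2.pow 5))).congr_fderiv ?_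
  ext <;> simp [hq]

/-- Let `f(u, v) = A(u) + B(v)` with `A` singular, and assume that the third derivative of `A` is
proportional to the second one as soon as the obvious necessary conditions hold. Then being a
`(2,5)`-cuspidal edge does not change when `A` and `B` are rescaled independently. -/
theorem aEquiv_fCE25_of_add {f f' : R2 → R3} {A B : ℝ → R3} {c₁ c₂ : ℝ} {c : R3} {p : R2}
    (hA : ContDiff ℝ (⊤ : ℕ∞) A) (hB : ContDiff ℝ (⊤ : ℕ∞) B) (hA1 : deriv A 0 = 0) (hB0 : B 0 = 0)
    (hf : ∀ q, f q = A (q.1 - p.1) + B (q.2 - p.2)) (hc₁ : c₁ ≠ 0) (hc₂ : c₂ ≠ 0)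
    (hf' : ∀ q, f' q = c₁ • A (q.1 - p.1) + c₂ • B (q.2 - p.2) + c)
    (hprop : ∀ ℓ₂ ℓ₃ : R3 →L[ℝ] ℝ, ℓ₃ ≠ 0 → deriv B 0 ≠ 0 → ℓ₂ (deriv B 0) = 0 →
      ℓ₂ (iteratedDeriv 2 A 0) ≠ 0 → ℓ₃ (deriv B 0) = 0 → ℓ₃ (iteratedDeriv 2 A 0) = 0 →
      ℓ₃ (iteratedDeriv 3 A 0) = 0 → ∃ κ : ℝ, iteratedDeriv 3 A 0 = κ • iteratedDeriv 2 A 0)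
    (h : AEquiv f p fCE25 (0, 0)) : AEquiv f' p fCE25 (0, 0) := by
  obtain ⟨Φ, Ψ, ⟨U, V, Φinv, hU, hpU, hV, hpV, hΦ, hΦinv, -, -, hΦl, -⟩, hΦp,
    ⟨U', V', Ψinv, hU', hpU', hV', hpV', hΨ, hΨinv, -, -, hΨl, hΨr⟩, hΨp, heq⟩ := h
  have hfp : f p = A 0 := by rw [hf]; simp [hB0]
  have hCE0 : fCE25 (0, 0) = 0 := by simp [fCE25]
  rw [hCE0] at hΨp
  set L := fderiv ℝ Ψ (f p) with hL
  set M := fderiv ℝ Φ p with hM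
  set N := fderiv ℝ Ψinv 0
  have hLN : ∀ w, L (N w) = w := fun w => by
    rw [hΨp] at hpV'
    have h1 : Ψinv 0 = f p := by rw [← hΨp]; exact hΨl _ hpU'
    have := fderiv_fderiv_of_leftInverse (p := (0 : R3)) hV' hpV' hU' (by rwa [h1]) hΨinv hΨ hΨr w
    rwa [h1] at this
  have hMinj : ∀ w, M w = 0 → w = 0 := fun w hw => by
    have := fderiv_fderiv_of_leftInverse hU hpU hV hpV hΦ hΦinv hΦl w
    rw [← this, ← hM, hw, map_zero]
  have hΨat := hΨ.contDiffAt (hU'.mem_nhds hpU')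
  have hΦat := hΦ.contDiffAt (hU.mem_nhds hpU)
  have hA' : HasDerivAt A 0 0 := by
    simpa [hA1] using (hA.differentiable (by simp) 0).hasDerivAt
  have hB' : HasDerivAt B (deriv B 0) 0 := (hB.differentiable (by simp) 0).hasDerivAt
  -- the first order relations between `L` and `M`
  have hfd : HasFDerivAt f ((ContinuousLinearMap.snd ℝ ℝ ℝ).smulRight (deriv B 0)) p := by
    have e1 : HasFDerivAt (fun q : R2 => q.1 - p.1) (ContinuousLinearMap.fst ℝ ℝ ℝ) p :=
      hasFDerivAt_fst.sub_const _
    have e2 : HasFDerivAt (fun q : R2 => q.2 - p.2) (ContinuousLinearMap.snd ℝ ℝ ℝ) p :=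
      hasFDerivAt_snd.sub_const _
    have e3 := HasFDerivAt.comp p (g := A) (by simpa using hA'.hasFDerivAt) e1
    have e4 := HasFDerivAt.comp p (g := B) (by simpa using hB'.hasFDerivAt) e2
    rw [funext hf]
    refine (e3.add e4).congr_fderiv ?_
    ext <;> simp
  have hLM : ∀ w : R2, w.2 • L (deriv B 0) = ((M w).1, 0, 0) := fun w => by
    have e1 : HasFDerivAt (fun q => Ψ (f q)) _ p :=
      (hΨat.differentiableAt (by simp)).hasFDerivAt.comp p hfd
    have e2 : HasFDerivAt (fun q => fCE25 (Φ q)) _ p :=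
      (hasFDerivAt_fCE25 (Φ p) (by rw [hΦp])).comp p (hΦat.differentiableAt (by simp)).hasFDerivAt
    have := congrArg (fun T : R2 →L[ℝ] R3 => T w)
      (e1.unique (e2.congr_of_eventuallyEq heq))
    rw [← map_smul]
    exact this
  have hM1 : (M (1, 0)).1 = 0 := by simpa using (congrArg Prod.fst (hLM (1, 0))).symm
  have hLB : L (deriv B 0) = ((M (0, 1)).1, 0, 0) := by simpa using hLM (0, 1)
  have hτ : (M (1, 0)).2 ≠ 0 := fun h0 => by
    have := hMinj (1, 0) (Prod.ext hM1 h0)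
    simp at this
  have hβ : (M (0, 1)).1 ≠ 0 := fun h0 => by
    have : M ((M (1, 0)).2 • (0, 1) - (M (0, 1)).2 • (1, 0)) = 0 := by
      rw [map_sub, map_smul, map_smul]
      refine Prod.ext ?_ ?_
      · simp [h0, hM1]
      · simp [mul_comm]
    have := congrArg Prod.snd (hMinj _ this)
    simp [hτ] at this
  -- the curve `u ↦ Φ (u, v₀)`
  let γ : ℝ → R2 := fun t => Φ (p.1 + t, p.2)
  let ι : ℝ → R2 := fun t => (p.1 + t, p.2)
  have hι : ContDiff ℝ (⊤ : ℕ∞) ι := (contDiff_const.add contDiff_id).prodMk contDiff_const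
  have hι0 : ι 0 = p := by simp [ι]
  have hI : IsOpen (ι ⁻¹' U) := hU.preimage hι.continuous
  have h0I : (0 : ℝ) ∈ ι ⁻¹' U := by simpa [hι0] using hpU
  have hγ : ContDiffOn ℝ (⊤ : ℕ∞) γ (ι ⁻¹' U) := hΦ.comp hι.contDiffOn fun t ht => ht
  have hγ0 : γ 0 = (0, 0) := by simp only [γ, add_zero]; exact hΦp
  have hγ' : HasDerivAt γ (M (1, 0)) 0 := by
    have e1 : HasDerivAt ι (1, 0) 0 :=
      ((hasDerivAt_id (0 : ℝ)).const_add p.1).prodMk (hasDerivAt_const _ _)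
    have e2 : HasFDerivAt Φ M (ι 0) := by
      rw [hι0]; exact (hΦat.differentiableAt (by simp)).hasFDerivAt
    exact e2.comp_hasDerivAt (0 : ℝ) e1
  let x : ℝ → ℝ := fun t => (γ t).1
  let y : ℝ → ℝ := fun t => (γ t).2
  have hx : ContDiffOn ℝ (⊤ : ℕ∞) x (ι ⁻¹' U) := contDiff_fst.comp_contDiffOn hγ
  have hy : ContDiffOn ℝ (⊤ : ℕ∞) y (ι ⁻¹' U) := contDiff_snd.comp_contDiffOn hγ
  have hy0 : y 0 = 0 := by simp only [y, hγ0]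
  have hy' : HasDerivAt y (M (1, 0)).2 0 := by
    have e1 : HasFDerivAt (Prod.snd : R2 → ℝ) (ContinuousLinearMap.snd ℝ ℝ ℝ) (γ 0) :=
      hasFDerivAt_snd
    exact e1.comp_hasDerivAt (0 : ℝ) hγ'
  have hιt : Tendsto ι (𝓝 0) (𝓝 p) := by simpa [hι0] using hι.continuous.tendsto 0
  have hΨA : ∀ᶠ t in 𝓝 0, Ψ (A t) = (x t, y t ^ 2, y t ^ 5) := by
    filter_upwards [hιt.eventually heq] with t ht
    rw [hf] at ht
    simp only [ι, add_sub_cancel_left, sub_self, hB0, add_zero] at ht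
    exact ht
  have hexp := isLittleO_comp_singular_curve hA hA1 hU' (by rwa [← hfp]) hΨ
  rw [← hfp, ← hL, hΨp] at hexp
  set X₂ := iteratedDeriv 2 A 0
  set X₃ := iteratedDeriv 3 A 0
  have hcomp : ∀ ℓ : R3 →L[ℝ] ℝ, (fun t => ℓ (x t, y t ^ 2, y t ^ 5)
      - (ℓ (L X₂) / 2 * t ^ 2 + ℓ (L X₃) / 6 * t ^ 3)) =o[𝓝 0] fun t => t ^ 3 := fun ℓ => by
    refine ((ℓ.isBigO_comp _ _).trans_isLittleO hexp).congr' ?_ EventuallyEq.rfl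
    filter_upwards [hΨA] with t ht
    rw [ht, sub_zero, map_sub, map_add, map_smul, map_smul, smul_eq_mul, smul_eq_mul]
    ring
  let pr₁ : R3 →L[ℝ] ℝ := ContinuousLinearMap.fst ℝ ℝ R2
  let pr₂ : R3 →L[ℝ] ℝ := (ContinuousLinearMap.fst ℝ ℝ ℝ).comp (ContinuousLinearMap.snd ℝ ℝ R2)
  let pr₃ : R3 →L[ℝ] ℝ := (ContinuousLinearMap.snd ℝ ℝ ℝ).comp (ContinuousLinearMap.snd ℝ ℝ R2)
  have hyO : y =O[𝓝 0] fun t => t := by simpa [hy0] using hy'.isBigO_sub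
  have hyo : (fun t => y t - (M (1, 0)).2 * t) =o[𝓝 0] fun t => t := by
    simpa [hy0, mul_comm] using hy'.isLittleO
  have h₃ : pr₃ (L X₂) = 0 ∧ pr₃ (L X₃) = 0 := by
    have e1 : (fun t => y t ^ 5) =o[𝓝 0] fun t : ℝ => t ^ 3 :=
      (hyO.pow 5).trans_isLittleO (isLittleO_pow_pow (by norm_num))
    have e2 := eq_zero_of_sq_add_cube_isLittleO (α := pr₃ (L X₂) / 2) (β := pr₃ (L X₃) / 6)
      ((e1.sub (hcomp pr₃)).congr_left fun t => sub_sub_cancel _ _)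
    exact ⟨by linarith [e2.1], by linarith [e2.2]⟩
  have h₂ : pr₂ (L X₂) ≠ 0 := by
    have e1 : (fun t => y t ^ 2 - (M (1, 0)).2 ^ 2 * t ^ 2) =o[𝓝 0] fun t : ℝ => t ^ 2 := by
      have := hyo.mul_isBigO (hyO.add (isBigO_const_mul_self (M (1, 0)).2 (fun t : ℝ => t) (𝓝 0)))
      exact (this.congr_left fun t => by ring).congr_right fun t => by ring
    have e2 := (hcomp pr₂).trans (isLittleO_pow_pow (by norm_num : 2 < 3))
    have e3 : (fun t : ℝ => pr₂ (L X₃) / 6 * t ^ 3) =o[𝓝 0] fun t => t ^ 2 :=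
      (isLittleO_pow_pow (by norm_num : 2 < 3)).const_mul_left _
    have e4 := eq_zero_of_mul_pow_isLittleO (c := pr₂ (L X₂) / 2 - (M (1, 0)).2 ^ 2)
      (((e1.sub e2).sub e3).congr_left fun t => by simp [pr₂]; ring)
    intro h0
    rw [h0] at e4
    exact hτ (by simpa using e4)
  obtain ⟨κ, hκ⟩ := hprop (pr₂.comp L) (pr₃.comp L)
    (fun h0 => by
      have := congrArg (fun T : R3 →L[ℝ] ℝ => T (N (0, 0, 1))) h0
      simp [hLN, pr₃] at this)
    (fun h0 => hβ (by rw [h0, map_zero] at hLB; simpa using (congrArg Prod.fst hLB).symm))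
    (by simp [hLB, pr₂]) h₂ (by simp [hLB, pr₃]) h₃.1 h₃.2
  have hμ : (fun t => x t - pr₁ (L X₂) / pr₂ (L X₂) * y t ^ 2) =o[𝓝 0] fun t => t ^ 3 := by
    refine ((hcomp pr₁).sub ((hcomp pr₂).const_mul_left (pr₁ (L X₂) / pr₂ (L X₂)))).congr_left
      fun t => ?_
    rw [hκ, map_smul, map_smul, map_smul]
    simp only [pr₁, pr₂, ContinuousLinearMap.comp_apply, ContinuousLinearMap.coe_snd',
      ContinuousLinearMap.coe_fst', smul_eq_mul] at h₂ ⊢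
    field_simp
    ring
  obtain ⟨E, O, hE, hO, hEO⟩ :=
    exists_eq_of_sub_sq_isLittleO hI h0I hx hy hy0 (by rwa [hy'.deriv]) hμ
  -- the new diffeomorphisms
  let α : R3 → R3 := fun w => (E w.2.1 + w.2.2 * O w.2.1, w.2)
  have hα : ContDiff ℝ (⊤ : ℕ∞) α := by
    have e1 : ContDiff ℝ (⊤ : ℕ∞) fun w : R3 => w.2.1 := contDiff_fst.comp contDiff_snd
    have e2 : ContDiff ℝ (⊤ : ℕ∞) fun w : R3 => w.2.2 := contDiff_snd.comp contDiff_snd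
    exact ((hE.comp e1).add (e2.mul (hO.comp e1))).prodMk contDiff_snd
  have hα0 : α 0 = 0 := by
    have := hEO.self_of_nhds
    simp only [hy0, x, hγ0] at this
    norm_num at this
    simp [α, ← this]
  let D : R3 → R3 := fun w => c₁ • Ψinv (α w) + c₂ • B w.1 + c
  have h0V' : (0 : R3) ∈ V' := hΨp ▸ hpV'
  have hS : IsOpen (α ⁻¹' V') := hV'.preimage hα.continuous
  have h0S : (0 : R3) ∈ α ⁻¹' V' := by rw [Set.mem_preimage, hα0]; exact h0V'
  have hD : ContDiffOn ℝ (⊤ : ℕ∞) D (α ⁻¹' V') :=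
    (((hΨinv.comp hα.contDiffOn fun w hw => hw).const_smul c₁).add
      ((hB.comp contDiff_fst).contDiffOn.const_smul c₂)).add contDiffOn_const
  have hDinj : Function.Injective (fderiv ℝ D 0) := by
    have e1 : HasFDerivAt α (fderiv ℝ α 0) 0 := (hα.differentiable (by simp) 0).hasFDerivAt
    have e2 : HasFDerivAt Ψinv N (α 0) := by
      rw [hα0]
      exact ((hΨinv.contDiffAt (hV'.mem_nhds h0V')).differentiableAt (by simp)).hasFDerivAt
    have e3 : HasFDerivAt (fun w : R3 => B w.1) _ 0 :=
      HasFDerivAt.comp (0 : R3) (g := B) (f := Prod.fst) hB'.hasFDerivAt hasFDerivAt_fst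
    have e4 := (((e2.comp 0 e1).const_smul c₁).add (e3.const_smul c₂)).add_const c
    have e5 : ∀ w, (fderiv ℝ α 0 w).2 = w.2 := fun w => by
      have : HasFDerivAt (fun w => (α w).2) (ContinuousLinearMap.snd ℝ ℝ R2) 0 := hasFDerivAt_snd
      exact congrArg (fun T : R3 →L[ℝ] R2 => T w)
        ((hasFDerivAt_snd.comp (0 : R3) e1).unique this)
    refine (injective_iff_map_eq_zero _).2 fun w hw => ?_
    rw [HasFDerivAt.fderiv (f := D) e4] at hw
    have hw2 : c₁ • fderiv ℝ α 0 w + c₂ • w.1 • L (deriv B 0) = 0 := by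
      have := congrArg L hw
      simpa [hLN] using this
    rw [hLB] at hw2
    have e6 : w.2 = 0 := by
      have : c₁ • w.2 + c₂ • w.1 • (0 : R2) = 0 := by
        rw [← e5]; exact congrArg Prod.snd hw2
      simpa [hc₁] using this
    have e7 : w.1 = 0 := by
      have hw3 : w = w.1 • (1, 0) := by
        refine Prod.ext ?_ ?_ <;> simp [e6]
      have e8 : fderiv ℝ α 0 w = 0 := by
        have e9 : HasDerivAt (fun t : ℝ => α (t, 0)) (fderiv ℝ α 0 (1, 0)) 0 :=
          HasFDerivAt.comp_hasDerivAt (0 : ℝ) (l := α) (f := fun t : ℝ => ((t, 0) : R3)) e1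
            ((hasDerivAt_id (0 : ℝ)).prodMk (hasDerivAt_const _ _))
        have e10 : fderiv ℝ α 0 (1, 0) = 0 := e9.unique (hasDerivAt_const (0 : ℝ) ((E 0 + 0 * O 0, 0) : R3))
        rw [hw3, map_smul, e10, smul_zero]
      rw [e8, smul_zero, zero_add] at hw2
      have := congrArg Prod.fst hw2
      simpa [hc₂, hβ] using this
    exact Prod.ext e7 e6
  obtain ⟨U₁, V₁, Dinv, hU₁, h0U₁, hV₁, h0V₁, hD₁, hDinv, hm₁, hm₂, hl₁, hr₁⟩ :=
    isLocalDiffeoAt_of_injective_fderiv hS h0S hD hDinj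
  let Φ' : R2 → R2 := fun q => (q.2 - p.2, y (q.1 - p.1))
  have hΦ'p : Φ' p = (0, 0) := by simp [Φ', hy0]
  let J : Set R2 := (fun q : R2 => q.1 - p.1) ⁻¹' (ι ⁻¹' U)
  have hq1 : ContDiff ℝ (⊤ : ℕ∞) fun q : R2 => q.1 - p.1 := contDiff_fst.sub contDiff_const
  have hJ : IsOpen J := hI.preimage hq1.continuous
  have hpJ : p ∈ J := by simpa [J] using h0I
  have hΦ' : ContDiffOn ℝ (⊤ : ℕ∞) Φ' J :=
    (contDiff_snd.sub contDiff_const).contDiffOn.prodMk (hy.comp hq1.contDiffOn fun q hq => hq)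
  have hΦ'inj : Function.Injective (fderiv ℝ Φ' p) := by
    have e1 : HasFDerivAt (fun q : R2 => q.1 - p.1) (ContinuousLinearMap.fst ℝ ℝ ℝ) p :=
      hasFDerivAt_fst.sub_const _
    have e2 : HasFDerivAt (fun q : R2 => q.2 - p.2) (ContinuousLinearMap.snd ℝ ℝ ℝ) p :=
      hasFDerivAt_snd.sub_const _
    have e3 := HasFDerivAt.comp p (g := y) (by simpa using hy'.hasFDerivAt) e1
    refine (injective_iff_map_eq_zero _).2 fun w hw => ?_
    rw [HasFDerivAt.fderiv (f := Φ') (e2.prodMk e3)] at hw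
    simp only [Prod.ext_iff] at hw
    refine Prod.ext ?_ ?_
    · simpa [hτ] using hw.2
    · simpa using hw.1
  have hf'D : ∀ᶠ q in 𝓝 p, f' q = D (fCE25 (Φ' q)) := by
    have ht : Tendsto (fun q : R2 => q.1 - p.1) (𝓝 p) (𝓝 0) := by
      simpa using hq1.continuous.tendsto p
    have hAU : ∀ᶠ t in 𝓝 0, A t ∈ U' :=
      hA.continuous.tendsto 0 |>.eventually (hU'.mem_nhds (by rwa [← hfp]))
    filter_upwards [ht.eventually hΨA, ht.eventually hEO, ht.eventually hAU] with q h1 h2 h3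
    rw [hf']
    simp only [D, α, fCE25, Φ']
    rw [← h2, ← h1, hΨl _ h3]
  have hf'p : f' p = D 0 := by rw [hf'D.self_of_nhds, hΦ'p, hCE0]
  have hD0 : Dinv (D 0) = 0 := hl₁ 0 h0U₁
  refine ⟨Φ', Dinv, isLocalDiffeoAt_of_injective_fderiv hJ hpJ hΦ' hΦ'inj, hΦ'p,
    ⟨V₁, U₁, D, hV₁, by rwa [hf'p], hU₁, by rwa [hf'p, hD0], hDinv, hD₁, hm₂, hm₁, hr₁, hl₁⟩,
    by rw [hf'p, hD0, hCE0], ?_⟩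
  have hCEt : Tendsto (fun q => fCE25 (Φ' q)) (𝓝 p) (𝓝 0) := by
    have e1 : ContinuousAt fCE25 (Φ' p) := (hasFDerivAt_fCE25 _ (by rw [hΦ'p])).continuousAt
    have e2 : ContinuousAt Φ' p := (hΦ'.contDiffAt (hJ.mem_nhds hpJ)).continuousAt
    have := (ContinuousAt.comp (f := Φ') e1 e2).tendsto
    simpa only [Function.comp_def, hΦ'p, hCE0] using this
  filter_upwards [hf'D, hCEt.eventually (hU₁.mem_nhds h0U₁)] with q h1 h2
  rw [h1, hl₁ _ h2]

end Core

section Weierstrass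

open Topology

/-- The null direction `s = 1` of `f_u` and `s = -1` of `f_v` for the Gauss map value `k`. -/
def weierstrassNull (s k : ℝ) : R3 := (-(s * (1 + k ^ 2)) / 2, (1 - k ^ 2) / 2, s * k)

theorem contDiff_weierstrassNull_comp (s : ℝ) {g : ℝ → ℝ} (hg : ContDiff ℝ (⊤ : ℕ∞) g) :
    ContDiff ℝ (⊤ : ℕ∞) fun t => weierstrassNull s (g t) :=
  ((contDiff_const.mul (contDiff_const.add (hg.pow 2))).neg.div_const 2).prodMk
    (((contDiff_const.sub (hg.pow 2)).div_const 2).prodMk (contDiff_const.mul hg))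

theorem hasDerivAt_weierstrassNull_comp (s : ℝ) {g : ℝ → ℝ} {g' t : ℝ} (hg : HasDerivAt g g' t) :
    HasDerivAt (fun t => weierstrassNull s (g t)) (g' • (-(s * g t), -g t, s)) t := by
  have h2 := hg.pow 2
  refine ((((h2.const_add 1).const_mul s).neg.div_const 2).prodMk
    (((h2.const_sub 1).div_const 2).prodMk (hg.const_mul s))).congr_deriv ?_
  refine Prod.ext ?_ (Prod.ext ?_ ?_) <;> simp <;> ring

theorem iteratedDeriv_of_deriv_eq_smul {E : Type*} [NormedAddCommGroup E] [NormedSpace ℝ E]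
    {A N : ℝ → E} {w : ℝ → ℝ} (hw : ContDiff ℝ (⊤ : ℕ∞) w) (hN : ContDiff ℝ (⊤ : ℕ∞) N)
    (hA : ∀ t, deriv A t = w t • N t) (hw0 : w 0 = 0) :
    iteratedDeriv 2 A 0 = deriv w 0 • N 0 ∧
      iteratedDeriv 3 A 0 = deriv (deriv w) 0 • N 0 + (2 * deriv w 0) • deriv N 0 := by
  have hw' : ∀ t, HasDerivAt w (deriv w t) t := fun t => (hw.differentiable (by simp) t).hasDerivAt
  have hN' : ∀ t, HasDerivAt N (deriv N t) t := fun t => (hN.differentiable (by simp) t).hasDerivAt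
  have hw'' : HasDerivAt (deriv w) (deriv (deriv w) 0) 0 :=
    ((contDiff_infty_iff_deriv.1 hw).2.differentiable (by simp) 0).hasDerivAt
  have hN'' : HasDerivAt (deriv N) (deriv (deriv N) 0) 0 :=
    ((contDiff_infty_iff_deriv.1 hN).2.differentiable (by simp) 0).hasDerivAt
  have h2 : iteratedDeriv 2 A = fun t => w t • deriv N t + deriv w t • N t := by
    rw [iteratedDeriv_succ, iteratedDeriv_one, funext hA]
    exact funext fun t => ((hw' t).smul (hN' t)).deriv
  constructor
  · simp [h2, hw0]
  · rw [iteratedDeriv_succ, h2]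
    refine (((hw' 0).smul hN'').add (hw''.smul (hN' 0))).deriv.trans ?_
    rw [hw0]
    module

theorem clm_apply_eq (ℓ : R3 →L[ℝ] ℝ) (x : R3) :
    ℓ x = x.1 * ℓ (1, 0, 0) + x.2.1 * ℓ (0, 1, 0) + x.2.2 * ℓ (0, 0, 1) := by
  have h : x = x.1 • ((1, 0, 0) : R3) + x.2.1 • ((0, 1, 0) : R3) + x.2.2 • ((0, 0, 1) : R3) := by
    refine Prod.ext ?_ (Prod.ext ?_ ?_) <;> simp
  conv_lhs => rw [h]
  simp only [map_add, map_smul, smul_eq_mul]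

theorem clm_eq_zero_of_weierstrassNull {s g k : ℝ} (hs : s * s = 1) (hgk : g * k ≠ 1)
    {ℓ : R3 →L[ℝ] ℝ} (h1 : ℓ (weierstrassNull s g) = 0) (h2 : ℓ (-(s * g), -g, s) = 0)
    (h3 : ℓ (weierstrassNull (-s) k) = 0) : ℓ = 0 := by
  rw [clm_apply_eq] at h1 h2 h3
  simp only [weierstrassNull] at h1 h2 h3
  have hx : ∀ x, ℓ x = _ := clm_apply_eq ℓ
  generalize ℓ (1, 0, 0) = P at *
  generalize ℓ (0, 1, 0) = Q at *
  generalize ℓ (0, 0, 1) = R at *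
  have hs0 : s ≠ 0 := by rintro rfl; simp at hs
  have e1 : (s * P + Q) * (1 - g * k) ^ 2 = 0 := by
    linear_combination 2 * h3 + 2 * k ^ 2 * h1 + (2 * k - 2 * g * k ^ 2) * h2
  have e2 : s * P + Q = 0 := by
    refine (mul_eq_zero.1 e1).resolve_right (pow_ne_zero 2 fun h => hgk ?_)
    linarith
  have e3 : s * R = 0 := by linear_combination h2 + g * e2
  have hR : R = 0 := (mul_eq_zero.1 e3).resolve_left hs0
  have hQ : Q = 0 := by
    linear_combination h1 + (1 + g ^ 2) / 2 * e2 - g * e3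
  have hP : P = 0 := by
    refine (mul_eq_zero.1 (?_ : s * P = 0)).resolve_left hs0
    linear_combination e2 - hQ
  exact ContinuousLinearMap.ext fun x => by simp [hx, hP, hQ, hR]

theorem weierstrassNull_eq_smul {s g k : ℝ} (hgk : g * k = 1) :
    weierstrassNull s g = -g ^ 2 • weierstrassNull (-s) k := by
  refine Prod.ext ?_ (Prod.ext ?_ ?_) <;> simp only [weierstrassNull, Prod.smul_fst, Prod.smul_snd,
    smul_eq_mul]
  · linear_combination s / 2 * (g * k + 1) * hgk
  · linear_combination -(1 / 2) * (g * k + 1) * hgk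
  · linear_combination -(s * g) * hgk

/-- The cuspidal edge criterion for a sum of two null curves, the first one being singular. -/
theorem aEquiv_fCE25_of_null {f f' : R2 → R3} {A B : ℝ → R3} {g w : ℝ → ℝ} {s b k c₁ c₂ : ℝ}
    {c : R3} {p : R2} (hs : s * s = 1) (hg : ContDiff ℝ (⊤ : ℕ∞) g) (hw : ContDiff ℝ (⊤ : ℕ∞) w)
    (hA : ContDiff ℝ (⊤ : ℕ∞) A) (hB : ContDiff ℝ (⊤ : ℕ∞) B)
    (hA' : ∀ t, deriv A t = w t • weierstrassNull s (g t)) (hw0 : w 0 = 0)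
    (hB' : deriv B 0 = b • weierstrassNull (-s) k) (hB0 : B 0 = 0)
    (hf : ∀ q, f q = A (q.1 - p.1) + B (q.2 - p.2)) (hc₁ : c₁ ≠ 0) (hc₂ : c₂ ≠ 0)
    (hf' : ∀ q, f' q = c₁ • A (q.1 - p.1) + c₂ • B (q.2 - p.2) + c)
    (h : AEquiv f p fCE25 (0, 0)) : AEquiv f' p fCE25 (0, 0) := by
  refine aEquiv_fCE25_of_add hA hB (by rw [hA', hw0, zero_smul]) hB0 hf hc₁ hc₂ hf' ?_ h
  intro ℓ₂ ℓ₃ hℓ₃ hb h₂B h₂A h₃B h₃A h₃A'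
  obtain ⟨i2, i3⟩ :=
    iteratedDeriv_of_deriv_eq_smul hw (contDiff_weierstrassNull_comp s hg) hA' hw0
  rw [(hasDerivAt_weierstrassNull_comp s (hg.differentiable (by simp) 0).hasDerivAt).deriv] at i3
  rw [i2, i3]
  rw [i2, map_smul, smul_eq_mul] at h₂A h₃A
  rw [hB', map_smul, smul_eq_mul] at h₂B h₃B
  have hb0 : b ≠ 0 := fun h0 => hb (by rw [hB', h0, zero_smul])
  have hw1 : deriv w 0 ≠ 0 := left_ne_zero_of_mul h₂A
  by_cases hg1 : deriv g 0 = 0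
  · refine ⟨deriv (deriv w) 0 / deriv w 0, ?_⟩
    rw [hg1, zero_smul, smul_zero, add_zero, smul_smul, div_mul_cancel₀ _ hw1]
  · have n1 := (mul_eq_zero.1 h₃A).resolve_left hw1
    rw [i3, map_add, map_smul, map_smul, map_smul, n1, smul_zero, zero_add, smul_eq_mul,
      smul_eq_mul] at h₃A'
    have n2 := (mul_eq_zero.1 ((mul_eq_zero.1 h₃A').resolve_left (mul_ne_zero two_ne_zero hw1))).resolve_left
      hg1
    refine absurd (clm_eq_zero_of_weierstrassNull hs (fun hgk => ?_) n1 n2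
      ((mul_eq_zero.1 h₃B).resolve_left hb0)) hℓ₃
    refine right_ne_zero_of_mul h₂A ?_
    rw [weierstrassNull_eq_smul hgk, map_smul, (mul_eq_zero.1 h₂B).resolve_left hb0, smul_zero]

theorem hasDerivAt_comp_fst {f : R2 → R3} (hf : Differentiable ℝ f) (u v : ℝ) :
    HasDerivAt (fun u => f (u, v)) (pu f (u, v)) u :=
  (hf (u, v)).hasFDerivAt.comp_hasDerivAt u ((hasDerivAt_id u).prodMk (hasDerivAt_const u v))

theorem hasDerivAt_comp_snd {f : R2 → R3} (hf : Differentiable ℝ f) (u v : ℝ) :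
    HasDerivAt (fun v => f (u, v)) (pv f (u, v)) v :=
  (hf (u, v)).hasFDerivAt.comp_hasDerivAt v ((hasDerivAt_const v u).prodMk (hasDerivAt_id v))

theorem exists_eq_smul_add_smul {f f' : R2 → R3} (hf : Differentiable ℝ f)
    (hf' : Differentiable ℝ f') {X Y : ℝ → R3} {c₁ c₂ : ℝ} (hu : ∀ q, pu f q = X q.1)
    (hv : ∀ q, pv f q = Y q.2) (hu' : ∀ q, pu f' q = c₁ • X q.1)
    (hv' : ∀ q, pv f' q = c₂ • Y q.2) (p : R2) :
    ∃ c, ∀ q, f' q = c₁ • f (q.1, p.2) + c₂ • (f (p.1, q.2) - f p) + c := by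
  have hu0 : ∀ v u₁ u₂, f' (u₁, v) - c₁ • f (u₁, p.2) = f' (u₂, v) - c₁ • f (u₂, p.2) := fun v => by
    have h : ∀ u, HasDerivAt (fun u => f' (u, v) - c₁ • f (u, p.2)) 0 u := fun u =>
      ((hasDerivAt_comp_fst hf' u v).sub ((hasDerivAt_comp_fst hf u p.2).const_smul c₁)).congr_deriv
        (by rw [hu, hu', sub_self])
    exact is_const_of_deriv_eq_zero (fun u => (h u).differentiableAt) fun u => (h u).deriv
  have hv0 : ∀ v₁ v₂, f' (p.1, v₁) - c₂ • f (p.1, v₁) = f' (p.1, v₂) - c₂ • f (p.1, v₂) := by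
    have h : ∀ v, HasDerivAt (fun v => f' (p.1, v) - c₂ • f (p.1, v)) 0 v := fun v =>
      ((hasDerivAt_comp_snd hf' p.1 v).sub
        ((hasDerivAt_comp_snd hf p.1 v).const_smul c₂)).congr_deriv (by rw [hv, hv', sub_self])
    exact is_const_of_deriv_eq_zero (fun v => (h v).differentiableAt) fun v => (h v).deriv
  refine ⟨f' p - c₁ • f p, fun q => ?_⟩
  have e1 := sub_eq_iff_eq_add.1 (hu0 q.2 q.1 p.1)
  have e2 := sub_eq_iff_eq_add.1 (hv0 q.2 p.2)
  simp only [Prod.mk.eta] at e1 e2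
  rw [e1, e2]
  module

theorem IsGTMS.pu_eq {f : R2 → R3} {g1 g2 w1 w2 : ℝ → ℝ} (hf : IsGTMS f g1 g2 w1 w2) (q : R2) :
    pu f q = w1 q.1 • weierstrassNull 1 (g1 q.1) := by
  rw [hf.deriv_u]
  refine Prod.ext ?_ (Prod.ext ?_ ?_) <;> simp [weierstrassNull] <;> ring

theorem IsGTMS.pv_eq {f : R2 → R3} {g1 g2 w1 w2 : ℝ → ℝ} (hf : IsGTMS f g1 g2 w1 w2) (q : R2) :
    pv f q = w2 q.2 • weierstrassNull (-1) (g2 q.2) := by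
  rw [hf.deriv_v]
  refine Prod.ext ?_ (Prod.ext ?_ ?_) <;> simp [weierstrassNull] <;> ring

theorem AEquiv.comp_swap {f f₂ : R2 → R3} {p p₂ : R2} (h : AEquiv f p f₂ p₂) :
    AEquiv (fun q => f q.swap) p.swap f₂ p₂ := by
  obtain ⟨Φ, Ψ, ⟨U, V, Φinv, hU, hpU, hV, hpV, hΦ, hΦinv, hm, hm', hl, hr⟩, hΦp, hΨ, hΨp, heq⟩ := h
  have hsw : ContDiff ℝ (⊤ : ℕ∞) (Prod.swap : R2 → R2) := contDiff_snd.prodMk contDiff_fst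
  refine ⟨fun q => Φ q.swap, Ψ, ⟨Prod.swap ⁻¹' U, V, fun q => (Φinv q).swap,
    hU.preimage hsw.continuous, by simpa using hpU, hV, by simpa using hpV,
    hΦ.comp hsw.contDiffOn fun q hq => hq, hsw.comp_contDiffOn hΦinv, fun q hq => hm hq,
    fun q hq => by simpa using hm' hq, fun q hq => ?_, fun q hq => by simpa using hr q hq⟩,
    by simpa using hΦp, by simpa using hΨ, by simpa using hΨp, ?_⟩
  · simp only [hl _ hq, Prod.swap_swap]
  · have ht : Tendsto (Prod.swap : R2 → R2) (𝓝 p.swap) (𝓝 p) := by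
      simpa using hsw.continuous.tendsto p.swap
    exact ht.eventually heq

/-- Rescaling the two null curves of a generalized timelike minimal surface by nonzero constants
preserves `(2,5)`-cuspidal edges at `ω`-singular points. -/
theorem IsGTMS.aEquiv_fCE25_of_rescale {f f' : R2 → R3} {g1 g2 w1 w2 w1' w2' : ℝ → ℝ}
    (hf : IsGTMS f g1 g2 w1 w2) (hf' : IsGTMS f' g1 g2 w1' w2') {c₁ c₂ : ℝ} (hc₁ : c₁ ≠ 0)
    (hc₂ : c₂ ≠ 0) (h1 : ∀ u, w1' u = c₁ * w1 u) (h2 : ∀ v, w2' v = c₂ * w2 v) {p : R2}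
    (hω : w1 p.1 * w2 p.2 = 0) (h : AEquiv f p fCE25 (0, 0)) : AEquiv f' p fCE25 (0, 0) := by
  have hd := hf.smooth_f.differentiable (by simp)
  have hd' := hf'.smooth_f.differentiable (by simp)
  obtain ⟨c, hc⟩ := exists_eq_smul_add_smul (c₁ := c₁) (c₂ := c₂)
    (X := fun u => w1 u • weierstrassNull 1 (g1 u))
    (Y := fun v => w2 v • weierstrassNull (-1) (g2 v)) hd hd' hf.pu_eq hf.pv_eq
    (fun q => by rw [hf'.pu_eq, h1, mul_smul]) (fun q => by rw [hf'.pv_eq, h2, mul_smul]) p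
  have hsplit : ∀ q, f q = f (q.1, p.2) + (f (p.1, q.2) - f p) := by
    obtain ⟨d, hd⟩ := exists_eq_smul_add_smul (c₁ := 1) (c₂ := 1)
      (X := fun u => w1 u • weierstrassNull 1 (g1 u))
      (Y := fun v => w2 v • weierstrassNull (-1) (g2 v)) hd hd hf.pu_eq hf.pv_eq
      (fun q => by rw [hf.pu_eq, one_smul]) (fun q => by rw [hf.pv_eq, one_smul]) p
    have := hd p
    simp only [Prod.mk.eta, one_smul, sub_self, add_zero, left_eq_add] at this
    intro q
    rw [hd q, this, one_smul, one_smul, add_zero]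
  have hadd : ∀ a : ℝ, ContDiff ℝ (⊤ : ℕ∞) fun t : ℝ => a + t := fun a =>
    contDiff_const.add contDiff_id
  have hsu : ContDiff ℝ (⊤ : ℕ∞) fun t => f (p.1 + t, p.2) :=
    hf.smooth_f.comp ((hadd _).prodMk contDiff_const)
  have hsv : ContDiff ℝ (⊤ : ℕ∞) fun t => f (p.1, p.2 + t) :=
    hf.smooth_f.comp (contDiff_const.prodMk (hadd _))
  have hdu : ∀ t, HasDerivAt (fun t => f (p.1 + t, p.2)) _ t := fun t =>
    (hasDerivAt_comp_fst hd (p.1 + t) p.2).comp_const_add p.1 t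
  have hdv : ∀ t, HasDerivAt (fun t => f (p.1, p.2 + t)) _ t := fun t =>
    (hasDerivAt_comp_snd hd p.1 (p.2 + t)).comp_const_add p.2 t
  rcases mul_eq_zero.1 hω with hw | hw
  · refine aEquiv_fCE25_of_null (A := fun t => f (p.1 + t, p.2))
      (B := fun t => f (p.1, p.2 + t) - f p) (g := fun t => g1 (p.1 + t))
      (w := fun t => w1 (p.1 + t)) (s := 1) (b := w2 p.2) (k := g2 p.2) (one_mul 1)
      (hf.smooth_g1.comp (hadd _)) (hf.smooth_w1.comp (hadd _)) hsu (hsv.sub contDiff_const)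
      (fun t => by rw [(hdu t).deriv, hf.pu_eq]) (by simpa using hw)
      (by rw [((hdv 0).sub_const _).deriv, hf.pv_eq, add_zero]) (by simp)
      (fun q => by simpa using hsplit q) hc₁ hc₂ (fun q => by simpa using hc q) h
  · have := aEquiv_fCE25_of_null (f' := fun q => f' q.swap) (p := p.swap)
      (c := c₁ • f p + c - c₂ • f p) (A := fun t => f (p.1, p.2 + t))
      (B := fun t => f (p.1 + t, p.2) - f p) (g := fun t => g2 (p.2 + t))
      (w := fun t => w2 (p.2 + t)) (s := -1) (b := w1 p.1) (k := g1 p.1) (by norm_num)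
      (hf.smooth_g2.comp (hadd _)) (hf.smooth_w2.comp (hadd _)) hsv (hsu.sub contDiff_const)
      (fun t => by rw [(hdv t).deriv, hf.pv_eq]) (by simpa using hw)
      (by rw [((hdu 0).sub_const _).deriv, hf.pu_eq, add_zero, neg_neg]) (by simp)
      (fun q => by
        rw [hsplit]
        simp only [Prod.fst_swap, Prod.snd_swap, add_sub_cancel]
        abel) hc₂ hc₁
      (fun q => by
        rw [hc]
        simp only [Prod.fst_swap, Prod.snd_swap, add_sub_cancel]
        module) h.comp_swap
    simpa using this.comp_swap

end Weierstrass

/-- invariance of (2,5)-cuspidal edges under the associated family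
(isometric deformation) and conjugation (anti-isometric deformation). -/
theorem invariance_25_cuspidal_edge
    (f fhat : R2 → R3) (F : ℝ → R2 → R3) (g1 g2 w1 w2 : ℝ → ℝ)
    (hf : IsGTMS f g1 g2 w1 w2)
    (hF : ∀ θ : ℝ, IsGTMS (F θ) g1 g2
      (fun u => Real.exp θ * w1 u) (fun v => Real.exp (-θ) * w2 v))
    (hfhat : IsGTMS fhat g1 g2 w1 (fun v => -w2 v))
    (p : R2) (hω : w1 p.1 * w2 p.2 = 0) :
    (AEquiv f p fCE25 (0, 0) ↔ ∀ θ : ℝ, AEquiv (F θ) p fCE25 (0, 0)) ∧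
    (AEquiv f p fCE25 (0, 0) ↔ AEquiv fhat p fCE25 (0, 0)) := by
  have h0 : ∀ θ, exp θ * w1 p.1 * (exp (-θ) * w2 p.2) = 0 := fun θ => by
    rw [mul_mul_mul_comm, hω, mul_zero]
  refine ⟨⟨fun h θ => ?_, fun h => ?_⟩, fun h => ?_, fun h => ?_⟩
  · exact hf.aEquiv_fCE25_of_rescale (hF θ) (exp_ne_zero θ) (exp_ne_zero (-θ)) (fun _ => rfl)
      (fun _ => rfl) hω h
  · exact (hF 0).aEquiv_fCE25_of_rescale hf one_ne_zero one_ne_zero (by simp) (by simp) (h0 0) (h 0)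
  · exact hf.aEquiv_fCE25_of_rescale hfhat one_ne_zero (neg_ne_zero.2 one_ne_zero) (by simp)
      (by simp) hω h
  · exact hfhat.aEquiv_fCE25_of_rescale hf one_ne_zero (neg_ne_zero.2 one_ne_zero) (by simp)
      (by simp) (by rw [mul_neg, hω, neg_zero]) h
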